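/- Let μ be a continuous non-negative function on [0,1], not identically zero, and let Z be the fundamental solution of the one-dimensional ultraslow diffusion equation, characterized by its Laplace transform in t. Then Z(t,x) ≥ 0 for all t > 0 and all x ∈ ℝ; moreover, if Z is jointly measurable and x ↦ Z(t,x) is integrable on ℝ for each t > 0, then ∫_ℝ Z(t,x) dx = 1 for almost every t > 0. -/

import Mathlib

open MeasureTheory Filter Set

/-- `K(p) = ∫₀¹ p^{α-1} μ(α) dα` for real `p > 0`. -/
noncomputable def Kreal (μ : ℝ → ℝ) (p : ℝ) : ℝ :=
  ∫ α in (0:ℝ)..1, p ^ (α - 1) * μ α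

/-!
The Laplace transform of `Z(·, x)` is `K(p) R_x(p K(p))`, where `R_x(u) = exp (-|x| √u) / (2 √u)`
is completely monotone. A mixture of powers `p^e` with exponents `e ≤ 0` is completely monotone;
hence so are `K` and the derivative of `p K(p)`, which is again a `K`, for the weight `α μ(α)`.
Composition with such a map `p K(p)` and products preserve complete monotonicity, so Bernstein's
theorem gives `Z ≥ 0`. Positivity allows exchanging the integrals in `t` and `x`: the mass
`t ↦ ∫ Z(t, x) dx` has the transform `K(p) · (p K(p))⁻¹ = p⁻¹` of the constant `1`, and uniqueness
of Laplace transforms concludes.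
-/

open scoped BoundedContinuousFunction NNReal

/-- The first `n` derivatives of `f` exist on `s` and alternate in sign, starting from `0 ≤ f`.
The recursion takes `g = -f'` as a witness, so that every order involves only nonnegative
functions and first derivatives. -/
inductive CompletelyMonotoneUpTo (s : Set ℝ) : ℕ → (ℝ → ℝ) → Prop
  | zero {f : ℝ → ℝ} (nonneg : ∀ x ∈ s, 0 ≤ f x) : CompletelyMonotoneUpTo s 0 f
  | succ {n : ℕ} {f g : ℝ → ℝ} (nonneg : ∀ x ∈ s, 0 ≤ f x)
      (hasDerivWithinAt : ∀ x ∈ s, HasDerivWithinAt f (-g x) s x)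
      (neg_deriv : CompletelyMonotoneUpTo s n g) : CompletelyMonotoneUpTo s (n + 1) f

namespace CompletelyMonotoneUpTo

variable {s t : Set ℝ} {n : ℕ} {f g φ : ℝ → ℝ}

theorem nonneg (hf : CompletelyMonotoneUpTo s n f) : ∀ x ∈ s, 0 ≤ f x := by
  cases hf with
  | zero h => exact h
  | succ h _ _ => exact h

theorem of_succ (hf : CompletelyMonotoneUpTo s (n + 1) f) : CompletelyMonotoneUpTo s n f := by
  induction n generalizing f with
  | zero => exact zero hf.nonneg
  | succ n ih =>
    obtain _ | ⟨hf₀, hf', hg⟩ := hf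
    exact succ hf₀ hf' (ih hg)

theorem congr (hf : CompletelyMonotoneUpTo s n f) (hgf : EqOn g f s) :
    CompletelyMonotoneUpTo s n g := by
  cases hf with
  | zero hf₀ => exact zero fun x hx => (hgf hx).symm ▸ hf₀ x hx
  | succ hf₀ hf' hf'' =>
    exact succ (fun x hx => (hgf hx).symm ▸ hf₀ x hx)
      (fun x hx => (hf' x hx).congr hgf (hgf hx)) hf''

theorem const {c : ℝ} (hc : 0 ≤ c) : CompletelyMonotoneUpTo s n fun _ => c := by
  induction n generalizing c with
  | zero => exact zero fun _ _ => hc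
  | succ n ih =>
    exact succ (fun _ _ => hc) (fun x _ => by simpa using hasDerivWithinAt_const x s c) (ih le_rfl)

theorem add (hf : CompletelyMonotoneUpTo s n f) (hg : CompletelyMonotoneUpTo s n g) :
    CompletelyMonotoneUpTo s n fun x => f x + g x := by
  have h₀ : ∀ x ∈ s, 0 ≤ f x + g x := fun x hx => add_nonneg (hf.nonneg x hx) (hg.nonneg x hx)
  induction n generalizing f g with
  | zero => exact zero h₀
  | succ n ih =>
    obtain _ | ⟨_, hf', hf''⟩ := hf
    obtain _ | ⟨_, hg', hg''⟩ := hg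
    refine succ h₀ (fun x hx => ((hf' x hx).add (hg' x hx)).congr_deriv ?_)
      (ih hf'' hg'' fun x hx => add_nonneg (hf''.nonneg x hx) (hg''.nonneg x hx))
    ring

theorem mul (hf : CompletelyMonotoneUpTo s n f) (hg : CompletelyMonotoneUpTo s n g) :
    CompletelyMonotoneUpTo s n fun x => f x * g x := by
  induction n generalizing f g with
  | zero => exact zero fun x hx => mul_nonneg (hf.nonneg x hx) (hg.nonneg x hx)
  | succ n ih =>
    have hf_pred := hf.of_succ
    have hg_pred := hg.of_succ
    obtain _ | ⟨hf₀, hf', hf''⟩ := hf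
    obtain _ | ⟨hg₀, hg', hg''⟩ := hg
    refine succ (fun x hx => mul_nonneg (hf₀ x hx) (hg₀ x hx))
      (fun x hx => ((hf' x hx).mul (hg' x hx)).congr_deriv ?_)
      ((ih hf'' hg_pred).add (ih hf_pred hg''))
    ring

/-- When `s = t = (0, ∞)`, the maps `φ` allowed here are the Bernstein functions. -/
theorem comp {φ' : ℝ → ℝ} (hf : CompletelyMonotoneUpTo t n f) (hφ : MapsTo φ s t)
    (hφ' : ∀ x ∈ s, HasDerivWithinAt φ (φ' x) s x) (hφ'' : CompletelyMonotoneUpTo s n φ') :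
    CompletelyMonotoneUpTo s n (f ∘ φ) := by
  induction n generalizing f with
  | zero => exact zero fun x hx => hf.nonneg _ (hφ hx)
  | succ n ih =>
    obtain _ | ⟨hf₀, hf', hf''⟩ := hf
    refine succ (fun x hx => hf₀ _ (hφ hx))
      (fun x hx => ((hf' _ (hφ hx)).comp x (hφ' x hx) hφ).congr_deriv ?_)
      ((ih hf'' hφ''.of_succ).mul hφ''.of_succ)
    exact neg_mul _ _

theorem antitoneOn (hf : CompletelyMonotoneUpTo s (n + 1) f) (hs : Convex ℝ s) :
    AntitoneOn f s := by
  obtain _ | ⟨-, hf', hg⟩ := hf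
  exact antitoneOn_of_hasDerivWithinAt_nonpos hs (fun x hx => (hf' x hx).continuousWithinAt)
    (fun x hx => (hf' x (interior_subset hx)).mono interior_subset)
    fun x hx => neg_nonpos.2 (hg.nonneg x (interior_subset hx))

theorem sub_comp_add_const (hf : CompletelyMonotoneUpTo s (n + 1) f) (hs : Convex ℝ s) {h : ℝ}
    (hh : 0 ≤ h) (hsh : MapsTo (· + h) s s) :
    CompletelyMonotoneUpTo s n fun x => f x - f (x + h) := by
  have h₀ : ∀ x ∈ s, 0 ≤ f x - f (x + h) := fun x hx =>
    sub_nonneg.2 (hf.antitoneOn hs hx (hsh hx) (le_add_of_nonneg_right hh))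
  induction n generalizing f with
  | zero => exact zero h₀
  | succ n ih =>
    obtain _ | ⟨-, hf', hg⟩ := hf
    refine succ h₀ (fun x hx => ?_) (ih hg fun x hx =>
      sub_nonneg.2 (hg.antitoneOn hs hx (hsh hx) (le_add_of_nonneg_right hh)))
    have hshift : HasDerivWithinAt (fun y => f (y + h)) (-_ * 1) s x :=
      (hf' _ (hsh hx)).comp x ((hasDerivWithinAt_id x s).add_const h) hsh
    exact ((hf' x hx).sub hshift).congr_deriv (by ring)

theorem exp_neg_mul {c : ℝ} (hc : 0 ≤ c) :
    CompletelyMonotoneUpTo s n fun x => Real.exp (-(c * x)) := by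
  induction n with
  | zero => exact zero fun x _ => (Real.exp_pos _).le
  | succ n ih =>
    refine succ (fun x _ => (Real.exp_pos _).le) (fun x _ => ?_) ((const hc).mul ih)
    have hlin : HasDerivAt (fun y => -(c * y)) (-c) x := by
      simpa using ((hasDerivAt_id x).const_mul c).fun_neg
    exact hlin.exp.hasDerivWithinAt.congr_deriv (by ring)

theorem rpow_neg {a : ℝ} (ha : 0 ≤ a) :
    CompletelyMonotoneUpTo (Ioi 0) n fun x => x ^ (-a) := by
  induction n generalizing a with
  | zero => exact zero fun x hx => Real.rpow_nonneg (le_of_lt hx) _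
  | succ n ih =>
    refine succ (fun x hx => Real.rpow_nonneg (le_of_lt hx) _) (fun x hx => ?_)
      ((const ha).mul (ih (a := a + 1) (by positivity)))
    refine (Real.hasDerivAt_rpow_const (.inl (ne_of_gt hx))).hasDerivWithinAt.congr_deriv ?_
    rw [neg_add', neg_mul]

end CompletelyMonotoneUpTo

/-- Complete monotonicity in the sense of Bernstein: `(-1)ⁿ f⁽ⁿ⁾ ≥ 0` on `s` for all `n`. -/
def CompletelyMonotoneOn (f : ℝ → ℝ) (s : Set ℝ) : Prop :=
  ∀ n, CompletelyMonotoneUpTo s n f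

section MixtureOfPowers

variable {Ω : Type*} [MeasurableSpace Ω] {ν : Measure Ω} {e w : Ω → ℝ} {C p : ℝ}

theorem rpow_le_rpow_add_rpow {a b q : ℝ} (ha : 0 < a) (haq : a ≤ q) (hqb : q ≤ b) (r : ℝ) :
    q ^ r ≤ a ^ r + b ^ r := by
  have ha' := Real.rpow_nonneg ha.le r
  have hb' := Real.rpow_nonneg (ha.le.trans (haq.trans hqb)) r
  rcases le_total 0 r with hr | hr
  · linarith [Real.rpow_le_rpow (ha.le.trans haq) hqb hr]
  · linarith [Real.rpow_le_rpow_of_nonpos ha haq hr]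

theorem integrable_rpow_mul (he : AEMeasurable e ν) (heC : ∀ᵐ ω ∂ν, |e ω| ≤ C)
    (hw : Integrable w ν) (hp : 0 < p) : Integrable (fun ω => p ^ e ω * w ω) ν := by
  have hmeas : AEMeasurable (fun ω => p ^ e ω) ν :=
    (Real.continuous_const_rpow hp.ne').measurable.comp_aemeasurable he
  refine hw.bdd_mul (c := Real.exp (|Real.log p| * C)) hmeas.aestronglyMeasurable ?_
  filter_upwards [heC] with ω hω
  refine (Real.abs_rpow_le_exp_log_mul p (e ω)).trans (Real.exp_le_exp.2 ?_)
  calc Real.log p * e ω ≤ |Real.log p| * |e ω| := (le_abs_self _).trans_eq (abs_mul _ _)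
    _ ≤ |Real.log p| * C := by gcongr

theorem hasDerivAt_integral_rpow_mul (he : AEMeasurable e ν) (heC : ∀ᵐ ω ∂ν, |e ω| ≤ C)
    (hw : Integrable w ν) (hp : 0 < p) :
    HasDerivAt (fun q => ∫ ω, q ^ e ω * w ω ∂ν) (∫ ω, p ^ (e ω - 1) * (e ω * w ω) ∂ν) p := by
  have he' : AEMeasurable (fun ω => e ω - 1) ν := by fun_prop
  have heC' : ∀ᵐ ω ∂ν, |e ω - 1| ≤ C + 1 := by
    filter_upwards [heC] with ω hω
    simpa using (abs_sub _ _).trans (add_le_add_left hω |1|)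
  have hew : Integrable (fun ω => e ω * w ω) ν := hw.bdd_mul he.aestronglyMeasurable heC
  have hint : ∀ q > 0, Integrable (fun ω => q ^ (e ω - 1) * |e ω * w ω|) ν :=
    fun q hq => integrable_rpow_mul he' heC' hew.abs hq
  refine (hasDerivAt_integral_of_dominated_loc_of_deriv_le
    (F' := fun q ω => q ^ (e ω - 1) * (e ω * w ω))
    (bound := fun ω => (p / 2) ^ (e ω - 1) * |e ω * w ω| + (2 * p) ^ (e ω - 1) * |e ω * w ω|)
    (Ioo_mem_nhds (half_lt_self hp) (by linarith : p < 2 * p)) ?_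
    (integrable_rpow_mul he heC hw hp) (integrable_rpow_mul he' heC' hew hp).aestronglyMeasurable
    (.of_forall fun ω q hq => ?_) ((hint _ (by positivity)).add (hint _ (by positivity)))
    (.of_forall fun ω q hq => ?_)).2
  · filter_upwards [lt_mem_nhds hp] with q hq
    exact (integrable_rpow_mul he heC hw hq).aestronglyMeasurable
  · have hq₀ : 0 < q := (half_pos hp).trans hq.1
    rw [norm_mul, Real.norm_of_nonneg (Real.rpow_nonneg hq₀.le _), Real.norm_eq_abs, ← add_mul]
    gcongr
    exact rpow_le_rpow_add_rpow (half_pos hp) hq.1.le hq.2.le _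
  · have hq₀ : 0 < q := (half_pos hp).trans hq.1
    exact ((Real.hasDerivAt_rpow_const (.inl hq₀.ne')).mul_const (w ω)).congr_deriv (by ring)

theorem completelyMonotoneOn_integral_rpow_mul (he : AEMeasurable e ν)
    (heC : ∀ᵐ ω ∂ν, |e ω| ≤ C) (he₀ : ∀ᵐ ω ∂ν, e ω ≤ 0) (hw : Integrable w ν) (hw₀ : 0 ≤ᵐ[ν] w) :
    CompletelyMonotoneOn (fun p => ∫ ω, p ^ e ω * w ω ∂ν) (Ioi 0) := by
  intro n
  have h₀ : ∀ {e w : Ω → ℝ}, 0 ≤ᵐ[ν] w → ∀ p ∈ Ioi (0 : ℝ), 0 ≤ ∫ ω, p ^ e ω * w ω ∂ν :=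
    fun hw₀ p hp => integral_nonneg_of_ae <| by
      filter_upwards [hw₀] with ω hω using mul_nonneg (Real.rpow_nonneg (le_of_lt hp) _) hω
  induction n generalizing e w C with
  | zero => exact .zero (h₀ hw₀)
  | succ n ih =>
    refine .succ (g := fun p => ∫ ω, p ^ (e ω - 1) * (-e ω * w ω) ∂ν) (h₀ hw₀) (fun p hp => ?_)
      (ih (C := C + 1) (by fun_prop) ?_ ?_ (hw.bdd_mul (c := C) (by fun_prop) (by simpa using heC))
        ?_)
    · refine (hasDerivAt_integral_rpow_mul he heC hw hp).hasDerivWithinAt.congr_deriv ?_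
      simp only [neg_mul, mul_neg, integral_neg, neg_neg]
    · filter_upwards [heC] with ω hω
      simpa using (abs_sub _ _).trans (add_le_add_left hω |1|)
    · filter_upwards [he₀] with ω hω
      linarith
    · filter_upwards [he₀, hw₀] with ω hω hwω using mul_nonneg (neg_nonneg.2 hω) hwω

end MixtureOfPowers

section Kernel

variable {μ : ℝ → ℝ} {p : ℝ}

theorem Kreal_eq_setIntegral (μ : ℝ → ℝ) (p : ℝ) :
    Kreal μ p = ∫ α in Ioc 0 1, p ^ (α - 1) * μ α :=
  intervalIntegral.integral_of_le zero_le_one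

theorem mul_Kreal_eq_setIntegral (μ : ℝ → ℝ) (hp : 0 < p) :
    p * Kreal μ p = ∫ α in Ioc 0 1, p ^ α * μ α := by
  rw [Kreal_eq_setIntegral, ← integral_const_mul]
  congr with α
  rw [← mul_assoc, Real.rpow_sub_one hp.ne', mul_div_cancel₀ _ hp.ne']

theorem ae_restrict_Ioc_abs_sub_one_le : ∀ᵐ α ∂volume.restrict (Ioc (0 : ℝ) 1), |α - 1| ≤ 1 :=
  ae_restrict_of_forall_mem measurableSet_Ioc fun α hα =>
    abs_le.2 ⟨by linarith [hα.1], by linarith [hα.2]⟩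

theorem completelyMonotoneOn_Kreal (hμ : IntegrableOn μ (Ioc 0 1))
    (hμ₀ : 0 ≤ᵐ[volume.restrict (Ioc 0 1)] μ) : CompletelyMonotoneOn (Kreal μ) (Ioi 0) := by
  rw [funext (Kreal_eq_setIntegral μ)]
  exact completelyMonotoneOn_integral_rpow_mul (C := 1) (by fun_prop) ae_restrict_Ioc_abs_sub_one_le
    (ae_restrict_of_forall_mem measurableSet_Ioc fun α hα => sub_nonpos.2 hα.2) hμ hμ₀

theorem hasDerivAt_mul_Kreal (hμ : IntegrableOn μ (Ioc 0 1)) (hp : 0 < p) :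
    HasDerivAt (fun q => q * Kreal μ q) (Kreal (fun α => α * μ α) p) p := by
  have habs : ∀ᵐ α ∂volume.restrict (Ioc (0 : ℝ) 1), |α| ≤ 1 :=
    ae_restrict_of_forall_mem measurableSet_Ioc fun α hα => (abs_of_pos hα.1).le.trans hα.2
  rw [Kreal_eq_setIntegral]
  refine (hasDerivAt_integral_rpow_mul (by fun_prop) habs hμ hp).congr_of_eventuallyEq ?_
  filter_upwards [lt_mem_nhds hp] with q hq using mul_Kreal_eq_setIntegral μ hq

theorem Kreal_pos (hμ : IntegrableOn μ (Ioc 0 1)) (hμ₀ : 0 ≤ᵐ[volume.restrict (Ioc 0 1)] μ)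
    (hμ_ne : ¬ μ =ᵐ[volume.restrict (Ioc 0 1)] 0) (hp : 0 < p) : 0 < Kreal μ p := by
  have hnonneg : 0 ≤ᵐ[volume.restrict (Ioc 0 1)] fun α => p ^ (α - 1) * μ α := by
    filter_upwards [hμ₀] with α hα using mul_nonneg (Real.rpow_nonneg hp.le _) hα
  rw [Kreal_eq_setIntegral]
  refine (integral_nonneg_of_ae hnonneg).lt_of_ne' fun h => hμ_ne ?_
  rw [integral_eq_zero_iff_of_nonneg_ae hnonneg
    (integrable_rpow_mul (by fun_prop) ae_restrict_Ioc_abs_sub_one_le hμ hp)] at h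
  filter_upwards [h] with α hα
  exact (mul_eq_zero.1 hα).resolve_left (Real.rpow_pos_of_pos hp _).ne'

end Kernel

section Resolvent

/-- The Green function `exp (-|x| √u) / (2 √u)` of `u - ∂²/∂x²` on the line. -/
noncomputable def resolventKernel (x u : ℝ) : ℝ :=
  Real.exp (-|x| * √u) / (2 * √u)

theorem completelyMonotoneOn_resolventKernel (x : ℝ) :
    CompletelyMonotoneOn (resolventKernel x) (Ioi 0) := by
  intro n
  have hsqrt : ∀ u ∈ Ioi (0 : ℝ),
      HasDerivWithinAt (fun u => √u) (1 / 2 * u ^ (-(1 / 2 : ℝ))) (Ioi 0) u := by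
    intro u hu
    refine (Real.hasDerivAt_sqrt (ne_of_gt hu)).hasDerivWithinAt.congr_deriv ?_
    rw [Real.rpow_neg (le_of_lt hu), ← Real.sqrt_eq_rpow]
    ring
  have hpow : CompletelyMonotoneUpTo (Ioi 0) n fun u => 1 / 2 * u ^ (-(1 / 2 : ℝ)) :=
    (CompletelyMonotoneUpTo.const (by norm_num)).mul (.rpow_neg (by norm_num))
  have hexp := (CompletelyMonotoneUpTo.exp_neg_mul (s := univ) (abs_nonneg x)).comp
    (mapsTo_univ _ _) hsqrt hpow
  refine (hpow.mul hexp).congr fun u hu => ?_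
  simp only [resolventKernel, Function.comp_apply]
  rw [Real.rpow_neg (le_of_lt hu), ← Real.sqrt_eq_rpow, neg_mul]
  ring

theorem integral_resolventKernel {u : ℝ} (hu : 0 < u) : ∫ x, resolventKernel x u = u⁻¹ := by
  have hu' : 0 < √u := Real.sqrt_pos.2 hu
  have hexp : ∫ x : ℝ, Real.exp (-|x| * √u) = 2 / √u := by
    simp only [neg_mul_comm |_|, mul_comm |_|]
    rw [integral_comp_abs (f := fun y => Real.exp (-√u * y)), integral_exp_mul_Ioi (by linarith)]
    simp [div_eq_mul_inv]
  simp only [resolventKernel]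
  rw [integral_div, hexp]
  field_simp
  rw [Real.sq_sqrt hu.le]

end Resolvent

section TestFunctions

variable {Ω X : Type*} [MeasurableSpace Ω] {ν : Measure Ω} [TopologicalSpace X]
  [MeasurableSpace X] {φ : Ω → X} {w : Ω → ℝ}

theorem setIntegral_preimage_nonneg_of_isClosed [OpensMeasurableSpace X]
    [HasOuterApproxClosed X] (hφ : Measurable φ) (hw : Integrable w ν)
    (h : ∀ g : X →ᵇ ℝ≥0, 0 ≤ ∫ ω, g (φ ω) * w ω ∂ν) {F : Set X} (hF : IsClosed F) :
    0 ≤ ∫ ω in φ ⁻¹' F, w ω ∂ν := by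
  rw [← integral_indicator (hφ hF.measurableSet)]
  refine ge_of_tendsto' (f := fun n => ∫ ω, hF.apprSeq n (φ ω) * w ω ∂ν) (x := atTop) ?_
    fun n => h _
  refine tendsto_integral_of_dominated_convergence (fun ω => ‖w ω‖) (fun n => ?_) hw.norm
    (fun n => .of_forall fun ω => ?_) (.of_forall fun ω => ?_)
  · exact ((hF.apprSeq n).continuous.measurable.comp hφ).coe_nnreal_real.aestronglyMeasurable.mul
      hw.aestronglyMeasurable
  · rw [norm_mul, NNReal.norm_eq]
    exact mul_le_of_le_one_left (norm_nonneg _)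
      (HasOuterApproxClosed.apprSeq_apply_le_one hF n (φ ω))
  · have hlim := tendsto_pi_nhds.1 (HasOuterApproxClosed.tendsto_apprSeq hF) (φ ω)
    have hind : (φ ⁻¹' F).indicator w ω
        = ((F.indicator (fun _ => (1 : ℝ≥0)) (φ ω) : ℝ≥0) : ℝ) * w ω := by
      by_cases hω : φ ω ∈ F <;> simp [hω]
    rw [hind]
    exact (NNReal.tendsto_coe.2 hlim).mul_const _

theorem setIntegral_preimage_nonneg [BorelSpace X]
    [TopologicalSpace.PseudoMetrizableSpace X] (hφ : Measurable φ) (hw : Integrable w ν)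
    (h : ∀ g : X →ᵇ ℝ≥0, 0 ≤ ∫ ω, g (φ ω) * w ω ∂ν) {E : Set X} (hE : MeasurableSet E) :
    0 ≤ ∫ ω in φ ⁻¹' E, w ω ∂ν := by
  let := TopologicalSpace.pseudoMetrizableSpacePseudoMetric X
  let σ : Measure X := (ν.withDensity fun ω => ‖w ω‖ₑ).map φ
  have : IsFiniteMeasure (ν.withDensity fun ω => ‖w ω‖ₑ) := isFiniteMeasure_withDensity hw.2.ne
  refine le_of_forall_pos_le_add fun ε hε => ?_
  obtain ⟨F, hFE, hF, hσ⟩ := hE.exists_isClosed_sdiff_lt (measure_ne_top σ E)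
    (ENNReal.ofReal_pos.2 hε).ne'
  have hdiff : |∫ ω in φ ⁻¹' (E \ F), w ω ∂ν| ≤ ε := by
    have hEF := hE.diff hF.measurableSet
    rw [Measure.map_apply hφ hEF, withDensity_apply _ (hφ hEF)] at hσ
    rw [← ENNReal.ofReal_le_ofReal_iff hε.le, ← Real.enorm_eq_ofReal_abs]
    exact (enorm_integral_le_lintegral_enorm _).trans hσ.le
  have hsplit : ∫ ω in φ ⁻¹' E, w ω ∂ν
      = ∫ ω in φ ⁻¹' F, w ω ∂ν + ∫ ω in φ ⁻¹' (E \ F), w ω ∂ν := by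
    rw [← setIntegral_union (disjoint_sdiff_right.preimage φ)
      (hφ (hE.diff hF.measurableSet)) hw.integrableOn hw.integrableOn, ← preimage_union,
      union_sdiff_cancel hFE]
  linarith [setIntegral_preimage_nonneg_of_isClosed hφ hw h hF, neg_le_of_abs_le hdiff]

theorem ae_nonneg_of_forall_integral_comp_mul_nonneg [BorelSpace X]
    [TopologicalSpace.PseudoMetrizableSpace X] (hφ : Measurable φ) {ψ : X → Ω} (hψ : Measurable ψ)
    (hψφ : ∀ᵐ ω ∂ν, ψ (φ ω) = ω) (hw : Integrable w ν)
    (h : ∀ g : X →ᵇ ℝ≥0, 0 ≤ ∫ ω, g (φ ω) * w ω ∂ν) : 0 ≤ᵐ[ν] w := by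
  refine ae_nonneg_of_forall_setIntegral_nonneg hw fun S hS _ => ?_
  have hpre : S =ᵐ[ν] φ ⁻¹' (ψ ⁻¹' S) := by
    filter_upwards [hψφ] with ω hω
    exact congrArg S hω.symm
  rw [setIntegral_congr_set hpre]
  exact setIntegral_preimage_nonneg hφ hw h (hψ hS)

end TestFunctions

section Moments

variable {Ω : Type*} [MeasurableSpace Ω] {ν : Measure Ω} {φ : Ω → unitInterval} {w : Ω → ℝ}

theorem integrable_continuousMap_comp_mul (hφ : Measurable φ) (hw : Integrable w ν)
    (g : C(unitInterval, ℝ)) : Integrable (fun ω => g (φ ω) * w ω) ν :=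
  hw.bdd_mul (c := ‖g‖) (g.continuous.measurable.comp hφ).aestronglyMeasurable
    (.of_forall fun _ => g.norm_coe_le_norm _)

theorem tendsto_integral_continuousMap_comp_mul (hφ : Measurable φ) (hw : Integrable w ν)
    {G : ℕ → C(unitInterval, ℝ)} {g : C(unitInterval, ℝ)} (hG : Tendsto G atTop (nhds g)) :
    Tendsto (fun n => ∫ ω, G n (φ ω) * w ω ∂ν) atTop (nhds (∫ ω, g (φ ω) * w ω ∂ν)) := by
  refine tendsto_integral_filter_of_dominated_convergence (fun ω => (‖g‖ + 1) * ‖w ω‖)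
    (.of_forall fun n => (integrable_continuousMap_comp_mul hφ hw _).aestronglyMeasurable) ?_
    (hw.norm.const_mul _) (.of_forall fun ω => ?_)
  · filter_upwards [hG.norm.eventually_le_const (lt_add_one ‖g‖)] with n hn
    refine .of_forall fun ω => ?_
    rw [norm_mul]
    gcongr
    exact ((G n).norm_coe_le_norm _).trans hn
  · exact (((continuous_eval_const (φ ω)).tendsto g).comp hG).mul_const _

theorem integral_bernsteinApproximation_comp_mul_nonneg (hφ : Measurable φ) (hw : Integrable w ν)
    (h : ∀ k m : ℕ, 0 ≤ ∫ ω, (φ ω : ℝ) ^ k * (1 - φ ω) ^ m * w ω ∂ν)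
    {g : C(unitInterval, ℝ)} (hg : 0 ≤ g) (n : ℕ) :
    0 ≤ ∫ ω, bernsteinApproximation n g (φ ω) * w ω ∂ν := by
  have hterm : ∀ k, 0 ≤ ∫ ω, bernstein n k (φ ω) * w ω ∂ν := fun k => by
    simp only [bernstein_apply, mul_assoc, integral_const_mul]
    simpa only [mul_assoc] using mul_nonneg (Nat.cast_nonneg (n.choose k)) (h k (n - k))
  simp only [bernsteinApproximation.apply, Finset.sum_mul, smul_eq_mul, mul_right_comm _ (g _)]
  rw [integral_finsetSum _ fun k _ => (integrable_continuousMap_comp_mul hφ hw _).mul_const _]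
  refine Finset.sum_nonneg fun k _ => ?_
  rw [integral_mul_const]
  exact mul_nonneg (hterm k) (hg _)

theorem integral_continuousMap_comp_mul_nonneg_of_moments (hφ : Measurable φ)
    (hw : Integrable w ν) (h : ∀ k m : ℕ, 0 ≤ ∫ ω, (φ ω : ℝ) ^ k * (1 - φ ω) ^ m * w ω ∂ν)
    {g : C(unitInterval, ℝ)} (hg : 0 ≤ g) : 0 ≤ ∫ ω, g (φ ω) * w ω ∂ν :=
  ge_of_tendsto'
    (tendsto_integral_continuousMap_comp_mul hφ hw (bernsteinApproximation_uniform g))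
    (integral_bernsteinApproximation_comp_mul_nonneg hφ hw h hg)

end Moments

/-- The Laplace transform `∫₀^∞ e^{-pt} f(t) dt` at real `p`; it is the junk value `0` where the
integral diverges. -/
noncomputable def laplaceTransform (f : ℝ → ℝ) (p : ℝ) : ℝ :=
  ∫ t in Ioi 0, Real.exp (-p * t) * f t

/-- The Laplace integral of `f` converges absolutely for every `p > 0`. -/
def LaplaceConvergent (f : ℝ → ℝ) : Prop :=
  ∀ p > 0, IntegrableOn (fun t => Real.exp (-p * t) * f t) (Ioi 0)

section Laplace

variable {f g : ℝ → ℝ} {p : ℝ}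

theorem laplaceConvergent_one : LaplaceConvergent fun _ => 1 := fun p hp => by
  simpa using integrableOn_exp_mul_Ioi (neg_neg_of_pos hp) 0

theorem laplaceTransform_one (hp : 0 < p) : laplaceTransform (fun _ => 1) p = p⁻¹ := by
  simp only [laplaceTransform, mul_one]
  rw [integral_exp_mul_Ioi (neg_neg_of_pos hp)]
  simp

theorem LaplaceConvergent.sub (hf : LaplaceConvergent f) (hg : LaplaceConvergent g) :
    LaplaceConvergent fun t => f t - g t := fun p hp => by
  simpa only [mul_sub] using! (hf p hp).sub (hg p hp)

theorem laplaceTransform_sub (hf : LaplaceConvergent f) (hg : LaplaceConvergent g) (hp : 0 < p) :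
    laplaceTransform (fun t => f t - g t) p = laplaceTransform f p - laplaceTransform g p := by
  simp only [laplaceTransform, mul_sub]
  exact integral_sub (hf p hp) (hg p hp)

theorem laplaceTransform_exp_mul (f : ℝ → ℝ) (p h : ℝ) :
    laplaceTransform (fun t => Real.exp (-h * t) * f t) p = laplaceTransform f (p + h) := by
  simp only [laplaceTransform, ← mul_assoc, ← Real.exp_add, ← add_mul, neg_add]

theorem LaplaceConvergent.exp_mul (hf : LaplaceConvergent f) {h : ℝ} (hh : 0 ≤ h) :
    LaplaceConvergent fun t => Real.exp (-h * t) * f t := fun p hp => by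
  simpa only [← mul_assoc, ← Real.exp_add, ← add_mul, neg_add] using hf (p + h) (by positivity)

theorem LaplaceConvergent.one_sub_exp_mul (hf : LaplaceConvergent f) {h : ℝ} (hh : 0 ≤ h) :
    LaplaceConvergent fun t => (1 - Real.exp (-h * t)) * f t := by
  simpa only [sub_mul, one_mul] using hf.sub (hf.exp_mul hh)

theorem laplaceTransform_one_sub_exp_mul (hf : LaplaceConvergent f) {h : ℝ} (hh : 0 ≤ h)
    (hp : 0 < p) : laplaceTransform (fun t => (1 - Real.exp (-h * t)) * f t) p
      = laplaceTransform f p - laplaceTransform f (p + h) := by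
  simp only [sub_mul, one_mul]
  rw [laplaceTransform_sub hf (hf.exp_mul hh) hp, laplaceTransform_exp_mul]

theorem laplaceTransform_one_sub_exp_pow_mul_nonneg (hf : LaplaceConvergent f) {n : ℕ}
    (h : CompletelyMonotoneUpTo (Ioi 0) n (laplaceTransform f)) {δ : ℝ} (hδ : 0 ≤ δ)
    (hp : 0 < p) : 0 ≤ laplaceTransform (fun t => (1 - Real.exp (-δ * t)) ^ n * f t) p := by
  induction n generalizing f with
  | zero => simpa using h.nonneg p hp
  | succ n ih =>
    simp only [pow_succ, mul_assoc]
    refine ih (hf.one_sub_exp_mul hδ) ?_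
    exact (h.sub_comp_add_const (convex_Ioi 0) hδ fun q hq => add_pos_of_pos_of_nonneg hq hδ).congr
      fun q hq => laplaceTransform_one_sub_exp_mul hf hδ hq

/-- Bernstein's theorem for densities. In the variable `s = exp (-t)`, iterated differences of the
transform are moments `∫ sᵏ (1 - s)ᵐ`, which control all positive test functions through Bernstein
polynomials. -/
theorem ae_nonneg_of_completelyMonotoneOn_laplaceTransform (hf : LaplaceConvergent f)
    (h : CompletelyMonotoneOn (laplaceTransform f) (Ioi 0)) :
    0 ≤ᵐ[volume.restrict (Ioi 0)] f := by
  let φ : ℝ → unitInterval := fun t => projIcc 0 1 zero_le_one (Real.exp (-t))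
  have hφ : Measurable φ := (continuous_projIcc.comp (by fun_prop)).measurable
  have hφ_eq : ∀ t ∈ Ioi (0 : ℝ), (φ t : ℝ) = Real.exp (-t) := fun t ht =>
    congrArg Subtype.val (projIcc_of_mem zero_le_one
      ⟨(Real.exp_pos _).le, Real.exp_le_one_iff.2 (neg_nonpos.2 (le_of_lt ht))⟩)
  have hψφ : ∀ᵐ t ∂volume.restrict (Ioi 0), -Real.log (φ t) = t :=
    ae_restrict_of_forall_mem measurableSet_Ioi fun t ht => by simp [hφ_eq t ht]
  have hmoments : ∀ k m : ℕ, 0 ≤ ∫ t in Ioi (0 : ℝ),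
      (φ t : ℝ) ^ k * (1 - φ t) ^ m * (Real.exp (-1 * t) * f t) := by
    intro k m
    convert laplaceTransform_one_sub_exp_pow_mul_nonneg hf (h m) zero_le_one
      (show (0 : ℝ) < k + 1 by positivity) using 1
    refine setIntegral_congr_fun measurableSet_Ioi fun t ht => ?_
    have hexp : Real.exp (-(k + 1) * t) = Real.exp (-t) ^ k * Real.exp (-1 * t) := by
      rw [← Real.exp_nat_mul, ← Real.exp_add]
      ring_nf
    simp only [hφ_eq t ht, hexp, neg_one_mul]
    ring
  have hexp_mul := ae_nonneg_of_forall_integral_comp_mul_nonneg hφ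
    (ψ := fun s : unitInterval => -Real.log s) (by fun_prop) hψφ (hf 1 one_pos) fun g =>
      integral_continuousMap_comp_mul_nonneg_of_moments hφ (hf 1 one_pos) hmoments
        (g := ⟨fun s => g s, by fun_prop⟩) fun s => (g s).2
  filter_upwards [hexp_mul] with t ht using nonneg_of_mul_nonneg_right ht (Real.exp_pos _)

theorem nonneg_of_completelyMonotoneOn_laplaceTransform (hfc : ContinuousOn f (Ioi 0))
    (hf : LaplaceConvergent f) (h : CompletelyMonotoneOn (laplaceTransform f) (Ioi 0)) :
    ∀ t > 0, 0 ≤ f t := by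
  have heq : f =ᵐ[volume.restrict (Ioi 0)] fun t => max (f t) 0 := by
    filter_upwards [ae_nonneg_of_completelyMonotoneOn_laplaceTransform hf h] with t ht
      using (max_eq_left ht).symm
  intro t ht
  rw [Measure.eqOn_open_of_ae_eq heq isOpen_Ioi hfc (ContinuousOn.sup hfc continuousOn_const) ht]
  exact le_max_right _ _

theorem ae_le_of_laplaceTransform_eq (hf : LaplaceConvergent f) (hg : LaplaceConvergent g)
    (h : EqOn (laplaceTransform f) (laplaceTransform g) (Ioi 0)) :
    f ≤ᵐ[volume.restrict (Ioi 0)] g := by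
  have hcm : CompletelyMonotoneOn (laplaceTransform fun t => g t - f t) (Ioi 0) := fun n =>
    (CompletelyMonotoneUpTo.const le_rfl).congr fun p hp => by
      rw [laplaceTransform_sub hg hf hp, h hp, sub_self]
  filter_upwards [ae_nonneg_of_completelyMonotoneOn_laplaceTransform (hg.sub hf) hcm] with t ht
    using sub_nonneg.1 ht

theorem ae_eq_of_laplaceTransform_eq (hf : LaplaceConvergent f) (hg : LaplaceConvergent g)
    (h : EqOn (laplaceTransform f) (laplaceTransform g) (Ioi 0)) :
    f =ᵐ[volume.restrict (Ioi 0)] g :=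
  (ae_le_of_laplaceTransform_eq hf hg h).antisymm (ae_le_of_laplaceTransform_eq hg hf h.symm)

variable {X : Type*} [MeasurableSpace X] {ρ : Measure X} [SFinite ρ] {Z : ℝ → X → ℝ}

theorem integrable_prod_exp_mul (hZm : AEStronglyMeasurable (Function.uncurry Z)
      ((volume.restrict (Ioi 0)).prod ρ)) (hZ₀ : ∀ t > 0, ∀ x, 0 ≤ Z t x)
    (hZ : ∀ x, IntegrableOn (fun t => Real.exp (-p * t) * Z t x) (Ioi 0))
    (hint : Integrable (fun x => laplaceTransform (fun t => Z t x) p) ρ) :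
    Integrable (Function.uncurry fun t x => Real.exp (-p * t) * Z t x)
      ((volume.restrict (Ioi 0)).prod ρ) := by
  have hexp : Measurable fun y : ℝ × X => Real.exp (-p * y.1) := by fun_prop
  refine (integrable_prod_iff' (hexp.aestronglyMeasurable.mul hZm)).2 ⟨.of_forall hZ, ?_⟩
  refine hint.congr (.of_forall fun x => setIntegral_congr_fun measurableSet_Ioi fun t ht => ?_)
  exact (Real.norm_of_nonneg (mul_nonneg (Real.exp_pos _).le (hZ₀ t ht x))).symm

theorem laplaceConvergent_integral
    (hZ : ∀ p > 0, Integrable (Function.uncurry fun t x => Real.exp (-p * t) * Z t x)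
      ((volume.restrict (Ioi 0)).prod ρ)) : LaplaceConvergent fun t => ∫ x, Z t x ∂ρ :=
  fun p hp => by simpa [integral_const_mul] using! (hZ p hp).integral_prod_left

theorem laplaceTransform_integral
    (hZ : Integrable (Function.uncurry fun t x => Real.exp (-p * t) * Z t x)
      ((volume.restrict (Ioi 0)).prod ρ)) :
    laplaceTransform (fun t => ∫ x, Z t x ∂ρ) p = ∫ x, laplaceTransform (fun t => Z t x) p ∂ρ := by
  simpa only [laplaceTransform, integral_const_mul] using integral_integral_swap hZ

end Laplace

section FundamentalSolution

variable {μ : ℝ → ℝ} {p : ℝ}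

theorem Kreal_mul_resolventKernel_eq (μ : ℝ → ℝ) (x p : ℝ) :
    Kreal μ p * resolventKernel x (p * Kreal μ p) = 1 / 2 * Kreal μ p / √(p * Kreal μ p)
      * Real.exp (-|x| * √(p * Kreal μ p)) := by
  rw [resolventKernel]
  ring

theorem completelyMonotoneOn_Kreal_mul_resolventKernel (hμ : IntegrableOn μ (Ioc 0 1))
    (hμ₀ : 0 ≤ᵐ[volume.restrict (Ioc 0 1)] μ) (hμ_ne : ¬ μ =ᵐ[volume.restrict (Ioc 0 1)] 0)
    (x : ℝ) :
    CompletelyMonotoneOn (fun p => Kreal μ p * resolventKernel x (p * Kreal μ p)) (Ioi 0) := by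
  intro n
  have hαμ : IntegrableOn (fun α => α * μ α) (Ioc 0 1) :=
    hμ.bdd_mul (c := 1) (by fun_prop) <| ae_restrict_of_forall_mem measurableSet_Ioc
      fun α hα => (Real.norm_of_nonneg hα.1.le).trans_le hα.2
  have hαμ₀ : 0 ≤ᵐ[volume.restrict (Ioc 0 1)] fun α => α * μ α := by
    filter_upwards [hμ₀, ae_restrict_mem measurableSet_Ioc] with α hμα hα
      using mul_nonneg hα.1.le hμα
  exact (completelyMonotoneOn_Kreal hμ hμ₀ n).mul <|
    (completelyMonotoneOn_resolventKernel x n).comp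
      (fun p hp => mul_pos hp (Kreal_pos hμ hμ₀ hμ_ne hp))
      (fun p hp => (hasDerivAt_mul_Kreal hμ hp).hasDerivWithinAt)
      (completelyMonotoneOn_Kreal hαμ hαμ₀ n)

theorem integral_Kreal_mul_resolventKernel (hK : 0 < Kreal μ p) (hp : 0 < p) :
    ∫ x, Kreal μ p * resolventKernel x (p * Kreal μ p) = p⁻¹ := by
  rw [integral_const_mul, integral_resolventKernel (mul_pos hp hK)]
  field_simp

theorem fundamental_solution_nonneg_and_mass_one_general (μ : ℝ → ℝ)
    (hμ : IntegrableOn μ (Ioc 0 1)) (hμ₀ : 0 ≤ᵐ[volume.restrict (Ioc 0 1)] μ)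
    (hμ_ne : ¬ μ =ᵐ[volume.restrict (Ioc 0 1)] 0) (Z : ℝ → ℝ → ℝ)
    (hZc : ∀ x, ContinuousOn (fun t => Z t x) (Ioi 0))
    (hZ : ∀ x, LaplaceConvergent fun t => Z t x)
    (hZlap : ∀ x, EqOn (laplaceTransform fun t => Z t x)
      (fun p => Kreal μ p * resolventKernel x (p * Kreal μ p)) (Ioi 0)) :
    (∀ t > 0, ∀ x, 0 ≤ Z t x) ∧
    (AEStronglyMeasurable (Function.uncurry Z) ((volume.restrict (Ioi 0)).prod volume) →
      ∀ᵐ t, 0 < t → Integrable (Z t) ∧ ∫ x, Z t x = 1) := by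
  have hcm x : CompletelyMonotoneOn (laplaceTransform fun t => Z t x) (Ioi 0) := fun n =>
    (completelyMonotoneOn_Kreal_mul_resolventKernel hμ hμ₀ hμ_ne x n).congr (hZlap x)
  have hZ₀ : ∀ t > 0, ∀ x, 0 ≤ Z t x := fun t ht x =>
    nonneg_of_completelyMonotoneOn_laplaceTransform (hZc x) (hZ x) (hcm x) t ht
  refine ⟨hZ₀, fun hZm => ?_⟩
  have hlap p (hp : 0 < p) : ∫ x, laplaceTransform (fun t => Z t x) p = p⁻¹ :=
    (integral_congr_ae (.of_forall fun x => hZlap x hp)).trans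
      (integral_Kreal_mul_resolventKernel (Kreal_pos hμ hμ₀ hμ_ne hp) hp)
  have hprod p (hp : 0 < p) := integrable_prod_exp_mul hZm hZ₀ (fun x => hZ x p hp)
    (.of_integral_ne_zero (by rw [hlap p hp]; positivity))
  have hmass := ae_eq_of_laplaceTransform_eq (laplaceConvergent_integral hprod)
    laplaceConvergent_one fun p hp => by
      rw [laplaceTransform_integral (hprod p hp), hlap p hp, laplaceTransform_one hp]
  filter_upwards [(ae_restrict_iff' measurableSet_Ioi).1 hmass] with t ht ht₀
  exact ⟨.of_integral_ne_zero ((ht ht₀).trans_ne one_ne_zero), ht ht₀⟩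

end FundamentalSolution

theorem not_ae_eq_zero_of_continuousOn_Icc {a b : ℝ} (hab : a < b) {f : ℝ → ℝ}
    (hf : ContinuousOn f (Icc a b)) (hne : ∃ x ∈ Icc a b, f x ≠ 0) :
    ¬ f =ᵐ[volume.restrict (Ioc a b)] 0 := fun h => by
  obtain ⟨x, hx, hfx⟩ := hne
  rw [restrict_Ioc_eq_restrict_Icc] at h
  exact hfx (Measure.eqOn_Icc_of_ae_eq volume hab.ne h hf continuousOn_const hx)

theorem fundamental_solution_nonneg_and_mass_one (μ : ℝ → ℝ)
    (hc : ContinuousOn μ (Set.Icc 0 1))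
    (hnn : ∀ α ∈ Set.Icc (0:ℝ) 1, 0 ≤ μ α)
    (hne : ∃ α ∈ Set.Icc (0:ℝ) 1, μ α ≠ 0)
    (Z : ℝ → ℝ → ℝ)
    (hZc : ∀ x : ℝ, ContinuousOn (fun t => Z t x) (Set.Ioi 0))
    (hZlap : ∀ p : ℝ, 0 < p → ∀ x : ℝ,
      IntegrableOn (fun t : ℝ => Real.exp (-p * t) * Z t x) (Set.Ioi 0) ∧
      ∫ t in Set.Ioi (0:ℝ), Real.exp (-p * t) * Z t x
        = (1 / 2) * Kreal μ p / Real.sqrt (p * Kreal μ p)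
            * Real.exp (-|x| * Real.sqrt (p * Kreal μ p))) :
    (∀ t > (0:ℝ), ∀ x : ℝ, 0 ≤ Z t x) ∧
    (Measurable (Function.uncurry Z) →
      (∀ t > (0:ℝ), Integrable (fun x : ℝ => Z t x)) →
      ∀ᵐ t : ℝ, 0 < t → ∫ x : ℝ, Z t x = 1) := by
  obtain ⟨hZ₀, hmass⟩ := fundamental_solution_nonneg_and_mass_one_general μ
    (hc.integrableOn_Icc.mono_set Ioc_subset_Icc_self)
    (ae_restrict_of_forall_mem measurableSet_Ioc fun α hα => hnn α (Ioc_subset_Icc_self hα))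
    (not_ae_eq_zero_of_continuousOn_Icc zero_lt_one hc hne) Z hZc
    (fun x p hp => (hZlap p hp x).1)
    fun x p hp => (hZlap p hp x).2.trans (Kreal_mul_resolventKernel_eq μ x p).symm
  exact ⟨hZ₀, fun hm _ => (hmass hm.aestronglyMeasurable).mono fun t ht ht₀ => (ht ht₀).2⟩
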